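/- Under hypotheses (H0)–(H3), the square-integrable martingale differences Z_n = χ(X_n) − χ(X_{n−1}) + ψ(X_n) satisfy (1/n) Σ_{l=1}^n Z_l² → σ² P_μ-almost surely as n → ∞. -/

import Mathlib

open MeasureTheory ProbabilityTheory Filter Bornology
open scoped ENNReal NNReal Topology

variable {E : Type*} [MeasurableSpace E] [MetricSpace E] [CompleteSpace E]
  [SecondCountableTopology E] [BorelSpace E]

/-- The Markov operator acting on functions: `Pf(x) = ∫ f(y) π(x, dy)`. -/
noncomputable def Pfun (π : Kernel E E) (f : E → ℝ) : E → ℝ := fun x => ∫ y, f y ∂(π x)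

/-- The Markov operator acting on measures (the transfer operator `ν ↦ νP`). -/
noncomputable def Pmeas (π : Kernel E E) (ν : MeasureTheory.Measure E) :
    MeasureTheory.Measure E := ν.bind (fun x => π x)

/-- `ν ∈ M_{1,1}`: a Borel probability measure with finite first moment. -/
def FiniteFirstMoment (ν : MeasureTheory.Measure E) : Prop :=
  IsProbabilityMeasure ν ∧ ∃ x₀ : E, Integrable (fun x => dist x₀ x) ν

/-- The Wasserstein (dual-Lipschitz) distance between two measures. -/
noncomputable def wassDist (ν₁ ν₂ : MeasureTheory.Measure E) : ℝ :=
  sSup {r : ℝ | ∃ f : E → ℝ, LipschitzWith 1 f ∧ r = |∫ x, f x ∂ν₁ - ∫ x, f x ∂ν₂|}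

/-- The natural filtration of the coordinate process on `ℕ → E`. -/
def natFilt : Filtration ℕ (MeasurableSpace.pi : MeasurableSpace (ℕ → E)) :=
  Filtration.natural (fun k (ω : ℕ → E) => ω k)
    (fun k => (measurable_pi_apply k).stronglyMeasurable)

/-- `ℙ` is the law of the Markov chain on `E^ℕ` with transition probability `π` and
initial distribution `ν`. -/
structure IsMarkovChainLaw (π : Kernel E E) (ν : MeasureTheory.Measure E)
    (P : MeasureTheory.Measure (ℕ → E)) : Prop where
  prob : IsProbabilityMeasure P
  init : P.map (fun ω => ω 0) = ν
  markov : ∀ (n : ℕ) (g : E → ℝ), Measurable g → IsBounded (Set.range g) →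
    P[(fun ω => g (ω (n + 1))) | natFilt n] =ᵐ[P] fun ω => ∫ y, g y ∂(π (ω n))

/-- The corrector function `χ = ∑_{i≥0} Pⁱψ`. -/
noncomputable def chiFun (π : Kernel E E) (ψ : E → ℝ) : E → ℝ :=
  fun x => ∑' i : ℕ, (Pfun π)^[i] ψ x

/-- The martingale `S_n = χ(X_n) - χ(X_0) + ∑_{i=0}^n ψ(X_i)` as a function of the trajectory. -/
noncomputable def SFun (π : Kernel E E) (ψ : E → ℝ) (n : ℕ) : (ℕ → E) → ℝ :=
  fun ω => chiFun π ψ (ω n) - chiFun π ψ (ω 0) + ∑ i ∈ Finset.range (n + 1), ψ (ω i)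

/-- The martingale differences `Z_n = χ(X_n) - χ(X_{n-1}) + ψ(X_n)`. -/
noncomputable def ZFun (π : Kernel E E) (ψ : E → ℝ) (n : ℕ) : (ℕ → E) → ℝ :=
  fun ω => chiFun π ψ (ω n) - chiFun π ψ (ω (n - 1)) + ψ (ω n)

/-!
With `G(x, y) = χ(y) - χ(x) + ψ(y)`, which is Lipschitz because the Wasserstein contraction makes
the series `χ` converge geometrically, `Z_{i+1} = G(X_i, X_{i+1})`. Truncate `G²` at level `R`: the
result is a bounded Lipschitz function of `(X_i, X_{i+1})`, so by the contraction its correlations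
decay geometrically in time and its averages over `i < n` are within `O(R² / √n)` in `L²` of its
stationary mean. The moment of order `2 + δ` bounds the error of the truncation by `O(R^(-δ))`.
At `R = n^(1/8)` the total error in `L¹` is a negative power of `n`, hence summable along the
subsequences `⌊a ^ k⌋` with `a > 1`. This gives almost sure convergence along them, and the gaps are
filled in by monotonicity of the partial sums of `Z_i²` and letting `a ↓ 1`.
-/

section AverageConvergence

variable {Ω : Type*} [MeasurableSpace Ω] {P : Measure Ω}

lemma ae_tendsto_zero_of_summable_integral_abs {f : ℕ → Ω → ℝ} (hf : ∀ k, Integrable (f k) P)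
    (hsum : Summable fun k => ∫ ω, |f k ω| ∂P) :
    ∀ᵐ ω ∂P, Tendsto (fun k => f k ω) atTop (𝓝 0) := by
  have hnorm : ∀ k, eLpNorm (f k) 1 P = ENNReal.ofReal (∫ ω, |f k ω| ∂P) := fun k => by
    rw [eLpNorm_one_eq_lintegral_enorm, ← ofReal_integral_norm_eq_lintegral_enorm (hf k)]
    rfl
  have hfin : ∑' k, eLpNorm (f k) 1 P ≠ ∞ := by
    simp_rw [hnorm]
    exact hsum.tsum_ofReal_ne_top
  filter_upwards [summable_norm_of_tsum_eLpNorm_ne_top le_rfl (fun k => (hf k).1) hfin] with ω hω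
  exact tendsto_zero_iff_norm_tendsto_zero.2 hω.tendsto_atTop_zero

lemma summable_natFloor_pow_rpow_neg {a ε : ℝ} (ha : 1 < a) (hε : 0 < ε) :
    Summable fun k : ℕ => (⌊a ^ k⌋₊ : ℝ) ^ (-ε) := by
  have ha0 : 0 < a := one_pos.trans ha
  have hgap : 0 < 1 - a⁻¹ := sub_pos.2 (inv_lt_one_of_one_lt₀ ha)
  refine Summable.of_nonneg_of_le (fun k => by positivity) (fun k => ?_)
    ((summable_geometric_of_lt_one (Real.rpow_nonneg ha0.le _)
      (Real.rpow_lt_one_of_one_lt_of_neg ha (neg_lt_zero.2 hε))).mul_left ((1 - a⁻¹) ^ (-ε)))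
  calc (⌊a ^ k⌋₊ : ℝ) ^ (-ε) ≤ ((1 - a⁻¹) * a ^ k) ^ (-ε) :=
        Real.rpow_le_rpow_of_nonpos (by positivity) (mul_pow_le_nat_floor_pow ha k)
          (neg_nonpos.2 hε.le)
    _ = (1 - a⁻¹) ^ (-ε) * (a ^ (-ε)) ^ k := by
        rw [Real.mul_rpow hgap.le (by positivity), Real.rpow_pow_comm ha0.le]

variable [IsFiniteMeasure P] {Y : ℕ → Ω → ℝ} {m : ℕ → ℝ} {l C ε : ℝ}

lemma ae_tendsto_average_natFloor_pow (hY : ∀ i, Integrable (Y i) P)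
    (hm : Tendsto m atTop (𝓝 l)) (hε : 0 < ε)
    (hC : ∀ n > 0, ∫ ω, |(∑ i ∈ Finset.range n, Y i ω) / n - m n| ∂P ≤ C * (n : ℝ) ^ (-ε))
    {a : ℝ} (ha : 1 < a) :
    ∀ᵐ ω ∂P, Tendsto (fun k : ℕ => (∑ i ∈ Finset.range ⌊a ^ k⌋₊, Y i ω) / ⌊a ^ k⌋₊)
      atTop (𝓝 l) := by
  have hfloor : Tendsto (fun k : ℕ => ⌊a ^ k⌋₊) atTop atTop :=
    tendsto_nat_floor_atTop.comp (tendsto_pow_atTop_atTop_of_one_lt ha)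
  have hsum : Summable fun k : ℕ =>
      ∫ ω, |(∑ i ∈ Finset.range ⌊a ^ k⌋₊, Y i ω) / ⌊a ^ k⌋₊ - m ⌊a ^ k⌋₊| ∂P :=
    Summable.of_nonneg_of_le (fun k => integral_nonneg fun _ => abs_nonneg _)
      (fun k => hC _ (Nat.floor_pos.2 (one_le_pow₀ ha.le)))
      ((summable_natFloor_pow_rpow_neg ha hε).mul_left C)
  have herror := ae_tendsto_zero_of_summable_integral_abs
    (fun k => ((integrable_finsetSum _ fun i _ => hY i).div_const _).sub (integrable_const _)) hsum
  filter_upwards [herror] with ω hω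
  simpa using hω.add (hm.comp hfloor)

lemma ae_tendsto_average_of_integral_abs_le (hY0 : ∀ i ω, 0 ≤ Y i ω)
    (hY : ∀ i, Integrable (Y i) P) (hm : Tendsto m atTop (𝓝 l)) (hε : 0 < ε)
    (hC : ∀ n > 0, ∫ ω, |(∑ i ∈ Finset.range n, Y i ω) / n - m n| ∂P ≤ C * (n : ℝ) ^ (-ε)) :
    ∀ᵐ ω ∂P, Tendsto (fun n : ℕ => (∑ i ∈ Finset.range n, Y i ω) / n) atTop (𝓝 l) := by
  let a : ℕ → ℝ := fun j => 1 + 1 / (j + 1)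
  have ha : ∀ j, 1 < a j := fun j => lt_add_of_pos_right _ (by positivity)
  have ha_lim : Tendsto a atTop (𝓝 1) := by
    simpa [a] using tendsto_one_div_add_atTop_nhds_zero_nat.const_add (1 : ℝ)
  filter_upwards [ae_all_iff.2 fun j => ae_tendsto_average_natFloor_pow hY hm hε hC (ha j)]
    with ω hω
  refine tendsto_div_of_monotone_of_tendsto_div_floor_pow _ l (fun i j hij => ?_) a ha ha_lim hω
  exact Finset.sum_le_sum_of_subset_of_nonneg (Finset.range_mono hij) fun i _ _ => hY0 i ω

end AverageConvergence

section SecondMoment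

variable {Ω : Type*} [MeasurableSpace Ω] {P : Measure Ω}

lemma sum_range_geometric_le {b r : ℝ} (hb : 0 ≤ b) (hr0 : 0 ≤ r) (hr1 : r < 1) (n : ℕ) :
    ∑ j ∈ Finset.range n, b * r ^ j ≤ b / (1 - r) := by
  rw [← Finset.mul_sum, Finset.range_eq_Ico, div_eq_mul_one_div]
  simpa only [pow_zero] using
    mul_le_mul_of_nonneg_left (geom_sum_Ico_le_of_lt_one (m := 0) (n := n) hr0 hr1) hb

lemma integral_sq_sum_le {V : ℕ → Ω → ℝ} (hV : ∀ k l, Integrable (fun ω => V k ω * V l ω) P)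
    {a b r : ℝ} (hb : 0 ≤ b) (hr0 : 0 ≤ r) (hr1 : r < 1) (hdiag : ∀ k, ∫ ω, V k ω ^ 2 ∂P ≤ a)
    (hoff : ∀ k j, ∫ ω, V k ω * V (k + 1 + j) ω ∂P ≤ b * r ^ j) (n : ℕ) :
    ∫ ω, (∑ k ∈ Finset.range n, V k ω) ^ 2 ∂P ≤ n * (a + 2 * b / (1 - r)) := by
  induction n with
  | zero => simp
  | succ n ih =>
    have hcross_int : Integrable (fun ω => ∑ k ∈ Finset.range n, V k ω * V n ω) P :=
      integrable_finsetSum _ fun k _ => hV k n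
    have hsq_int : Integrable (fun ω => (∑ k ∈ Finset.range n, V k ω) ^ 2) P := by
      simp_rw [sq, Finset.sum_mul_sum]
      exact integrable_finsetSum _ fun k _ => integrable_finsetSum _ fun l _ => hV k l
    have hcross : ∫ ω, ∑ k ∈ Finset.range n, V k ω * V n ω ∂P ≤ b / (1 - r) := by
      rw [integral_finsetSum _ fun k _ => hV k n]
      refine le_trans ?_ (sum_range_geometric_le hb hr0 hr1 n)
      rw [← Finset.sum_range_reflect]
      refine Finset.sum_le_sum fun k hk => ?_
      have hkn := Finset.mem_range.1 hk
      simpa [show n - 1 - k + 1 + k = n by lia] using hoff (n - 1 - k) k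
    have hexpand : ∀ ω, (∑ k ∈ Finset.range (n + 1), V k ω) ^ 2 =
        (∑ k ∈ Finset.range n, V k ω) ^ 2 + 2 * ∑ k ∈ Finset.range n, V k ω * V n ω
          + V n ω ^ 2 := fun ω => by
      rw [Finset.sum_range_succ, add_sq, ← Finset.sum_mul, mul_assoc]
    have hlast : Integrable (fun ω => V n ω ^ 2) P := by simpa only [sq] using hV n n
    rw [integral_congr_ae (ae_of_all _ hexpand),
      integral_add (f := fun ω => _ + _) (hsq_int.add (hcross_int.const_mul 2)) hlast,
      integral_add hsq_int (hcross_int.const_mul 2), integral_const_mul]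
    push_cast
    linarith [hdiag n, mul_div_assoc 2 b (1 - r)]

variable [IsProbabilityMeasure P]

lemma integral_abs_le_sqrt_integral_sq {X : Ω → ℝ} (hX : MemLp X 2 P) :
    ∫ ω, |X ω| ∂P ≤ √(∫ ω, X ω ^ 2 ∂P) := by
  refine Real.le_sqrt_of_sq_le ?_
  have hvar := (variance_nonneg (fun ω => |X ω|) P).trans_eq (variance_eq_sub hX.abs)
  simpa [Pi.pow_def] using hvar

lemma integral_abs_average_sub_le {f g : ℕ → Ω → ℝ} {m v t : ℝ} {n : ℕ} (hn : 0 < n)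
    (hf : ∀ i, Integrable (f i) P) (hg : ∀ i, MemLp (g i) 2 P)
    (hv : ∫ ω, (∑ i ∈ Finset.range n, (g i ω - m)) ^ 2 ∂P ≤ n * v)
    (ht : ∀ i, ∫ ω, |f i ω - g i ω| ∂P ≤ t) :
    ∫ ω, |(∑ i ∈ Finset.range n, f i ω) / n - m| ∂P ≤ √(v / n) + t := by
  have hn' : (0 : ℝ) < n := Nat.cast_pos.2 hn
  let D : Ω → ℝ := fun ω => ∑ i ∈ Finset.range n, (g i ω - m)
  have hD : MemLp D 2 P := memLp_finsetSum _ fun i _ => (hg i).sub (memLp_const m)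
  have hfg : ∀ i, Integrable (fun ω => |f i ω - g i ω|) P := fun i =>
    ((hf i).sub ((hg i).integrable one_le_two)).abs
  have hT : Integrable (fun ω => ∑ i ∈ Finset.range n, |f i ω - g i ω|) P :=
    integrable_finsetSum _ fun i _ => hfg i
  have hsplit : ∀ ω, |(∑ i ∈ Finset.range n, f i ω) / n - m| ≤
      (|D ω| + ∑ i ∈ Finset.range n, |f i ω - g i ω|) / n := fun ω => by
    have hsum : (∑ i ∈ Finset.range n, f i ω) / n - m =
        (D ω + ∑ i ∈ Finset.range n, (f i ω - g i ω)) / n := by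
      simp only [D, Finset.sum_sub_distrib, Finset.sum_const, Finset.card_range, nsmul_eq_mul]
      field_simp
      ring
    rw [hsum, abs_div, Nat.abs_cast]
    gcongr
    exact (abs_add_le _ _).trans (by gcongr; exact Finset.abs_sum_le_sum_abs _ _)
  calc ∫ ω, |(∑ i ∈ Finset.range n, f i ω) / n - m| ∂P
      ≤ ∫ ω, (|D ω| + ∑ i ∈ Finset.range n, |f i ω - g i ω|) / n ∂P :=
        integral_mono_of_nonneg (ae_of_all _ fun _ => abs_nonneg _)
          (((hD.integrable one_le_two).abs.add hT).div_const _) (ae_of_all _ hsplit)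
    _ = (∫ ω, |D ω| ∂P + ∑ i ∈ Finset.range n, ∫ ω, |f i ω - g i ω| ∂P) / n := by
        rw [integral_div, integral_add (hD.integrable one_le_two).abs hT,
          integral_finsetSum _ fun i _ => hfg i]
    _ ≤ (√(n * v) + n * t) / n := by
        gcongr
        · exact (integral_abs_le_sqrt_integral_sq hD).trans (Real.sqrt_le_sqrt hv)
        · exact (Finset.sum_le_card_nsmul _ _ t fun i _ => ht i).trans_eq (by simp)
    _ = √(v / n) + t := by
        rw [add_div, mul_div_cancel_left₀ _ hn'.ne', show v / n = n * v / (n : ℝ) ^ 2 by field_simp,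
          Real.sqrt_div' _ (sq_nonneg _), Real.sqrt_sq hn'.le]

end SecondMoment

section LimitsAndConditioning

variable {Ω : Type*} [mΩ : MeasurableSpace Ω] {P : Measure Ω}

lemma tendsto_integral_of_le_of_integral_le {F : ℕ → Ω → ℝ} {f : Ω → ℝ} {M : ℝ}
    (hF : ∀ n, Integrable (F n) P) (hF0 : ∀ n ω, 0 ≤ F n ω) (hFf : ∀ n ω, F n ω ≤ f ω)
    (hlim : ∀ ω, Tendsto (fun n => F n ω) atTop (𝓝 (f ω))) (hM : ∀ n, ∫ ω, F n ω ∂P ≤ M) :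
    Tendsto (fun n => ∫ ω, F n ω ∂P) atTop (𝓝 (∫ ω, f ω ∂P)) := by
  have hnorm : ∀ n, eLpNorm (F n) 1 P ≤ ENNReal.ofReal M := fun n => by
    rw [eLpNorm_one_eq_lintegral_enorm, ← ofReal_integral_norm_eq_lintegral_enorm (hF n)]
    simp only [Real.norm_of_nonneg (hF0 n _)]
    exact ENNReal.ofReal_le_ofReal (hM n)
  have hfatou : eLpNorm f 1 P ≤ ENNReal.ofReal M :=
    (Lp.eLpNorm_lim_le_liminf_eLpNorm (fun n => (hF n).1) f (ae_of_all _ hlim)).trans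
      (liminf_le_of_frequently_le' (Frequently.of_forall hnorm))
  have hf : Integrable f P := memLp_one_iff_integrable.1
    ⟨aestronglyMeasurable_of_tendsto_ae atTop (fun n => (hF n).1) (ae_of_all _ hlim),
      hfatou.trans_lt ENNReal.ofReal_lt_top⟩
  refine tendsto_integral_of_dominated_convergence f (fun n => (hF n).1) hf
    (fun n => ae_of_all _ fun ω => ?_) (ae_of_all _ hlim)
  rw [Real.norm_of_nonneg (hF0 n ω)]
  exact hFf n ω

lemma abs_integral_mul_le_integral_abs_condExp [IsFiniteMeasure P] {m : MeasurableSpace Ω}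
    (hm : m ≤ mΩ) {U V : Ω → ℝ} {b : ℝ} (hU : StronglyMeasurable[m] U) (hUb : ∀ ω, |U ω| ≤ b)
    (hV : Integrable V P) :
    |∫ ω, U ω * V ω ∂P| ≤ b * ∫ ω, |(P[V | m]) ω| ∂P := by
  have hpull : ∫ ω, U ω * V ω ∂P = ∫ ω, U ω * (P[V | m]) ω ∂P :=
    (integral_condExp hm).symm.trans (integral_congr_ae
      (condExp_stronglyMeasurable_mul_of_bound hm hU hV b (ae_of_all _ hUb)))
  rw [hpull, ← integral_const_mul]
  refine abs_integral_le_integral_abs.trans (integral_mono_of_nonneg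
    (ae_of_all _ fun _ => abs_nonneg _) (integrable_condExp.abs.const_mul b)
    (ae_of_all _ fun ω => ?_))
  simp only [abs_mul]
  gcongr
  exact hUb ω

end LimitsAndConditioning

section Truncation

lemma pow_le_one_add_rpow {z p : ℝ} {n : ℕ} (hz : 0 ≤ z) (hp : n ≤ p) : z ^ n ≤ 1 + z ^ p := by
  rcases le_total z 1 with h | h
  · exact (pow_le_one₀ hz h).trans (le_add_of_nonneg_right (Real.rpow_nonneg hz p))
  · rw [← Real.rpow_natCast]
    exact (Real.rpow_le_rpow_of_exponent_le h hp).trans (le_add_of_nonneg_left zero_le_one)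

/-- The square `z ^ 2` truncated at level `R`, i.e. the square of `|z| ∧ R`; unlike the square
itself it is bounded and Lipschitz. -/
noncomputable def truncSq (R : ℝ≥0) (z : ℝ) : ℝ := min |z| R ^ 2

variable (R : ℝ≥0) (z : ℝ)

lemma truncSq_nonneg : 0 ≤ truncSq R z := sq_nonneg _

lemma truncSq_le_sq : truncSq R z ≤ z ^ 2 := by
  rw [truncSq, ← sq_abs z]
  gcongr
  exact min_le_left _ _

lemma abs_truncSq_le : |truncSq R z| ≤ R ^ 2 := by
  rw [abs_of_nonneg (truncSq_nonneg R z), truncSq]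
  gcongr
  exact min_le_right _ _

lemma lipschitzWith_truncSq : LipschitzWith (2 * R) (truncSq R) := by
  refine LipschitzWith.of_dist_le_mul fun x y => ?_
  have hmin : |min |x| (R : ℝ) - min |y| R| ≤ dist x y := by
    simpa [Real.dist_eq] using (lipschitzWith_one_norm.min_const (R : ℝ)).dist_le_mul x y
  have hsum : |min |x| (R : ℝ) + min |y| R| ≤ 2 * R := by
    rw [abs_of_nonneg (by positivity)]
    linarith [min_le_right |x| (R : ℝ), min_le_right |y| (R : ℝ)]
  rw [Real.dist_eq, truncSq, truncSq, sq_sub_sq, abs_mul]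
  push_cast
  gcongr

lemma sq_sub_truncSq_le {R : ℝ≥0} (hR : 0 < R) {δ : ℝ} (hδ : 0 ≤ δ) :
    z ^ 2 - truncSq R z ≤ R ^ (-δ) * |z| ^ (2 + δ) := by
  have hR' : (0 : ℝ) < R := hR
  rcases le_total |z| R with h | h
  · rw [truncSq, min_eq_left h, sq_abs, sub_self]
    positivity
  · have hz : 0 < |z| := hR'.trans_le h
    calc z ^ 2 - truncSq R z ≤ |z| ^ (-δ) * |z| ^ (2 + δ) := by
          rw [← Real.rpow_add hz, neg_add_cancel_comm_assoc, Real.rpow_two, sq_abs]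
          exact sub_le_self _ (truncSq_nonneg R z)
      _ ≤ R ^ (-δ) * |z| ^ (2 + δ) := by
          gcongr ?_ * _
          exact Real.rpow_le_rpow_of_nonpos hR' h (neg_nonpos.2 hδ)

lemma tendsto_truncSq_sq : Tendsto (fun R : ℝ≥0 => truncSq R z) atTop (𝓝 (z ^ 2)) := by
  refine tendsto_const_nhds.congr' ?_
  filter_upwards [eventually_ge_atTop ‖z‖₊] with R hR
  rw [truncSq, min_eq_left (by exact_mod_cast hR), sq_abs]

variable {Ω : Type*} [MeasurableSpace Ω] {P : Measure Ω} {X : Ω → ℝ} {δ : ℝ}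

lemma integrable_sq_of_integrable_rpow [IsFiniteMeasure P] (hX : AEStronglyMeasurable X P)
    (hδ : 0 ≤ δ) (hint : Integrable (fun ω => |X ω| ^ (2 + δ)) P) :
    Integrable (fun ω => X ω ^ 2) P := by
  refine ((integrable_const 1).add hint).mono' (hX.pow 2) (ae_of_all _ fun ω => ?_)
  rw [Real.norm_of_nonneg (sq_nonneg _), ← sq_abs]
  exact pow_le_one_add_rpow (abs_nonneg _) (by simpa using hδ)

lemma integral_abs_sq_sub_truncSq_le {R : ℝ≥0} (hδ : 0 ≤ δ)
    (hint : Integrable (fun ω => |X ω| ^ (2 + δ)) P) (hR : 0 < R) :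
    ∫ ω, |X ω ^ 2 - truncSq R (X ω)| ∂P ≤ R ^ (-δ) * ∫ ω, |X ω| ^ (2 + δ) ∂P := by
  rw [← integral_const_mul]
  refine integral_mono_of_nonneg (ae_of_all _ fun _ => abs_nonneg _) (hint.const_mul _)
    (ae_of_all _ fun ω => ?_)
  dsimp only
  rw [abs_of_nonneg (sub_nonneg.2 (truncSq_le_sq R _))]
  exact sq_sub_truncSq_le _ hR hδ

end Truncation

section Wasserstein

variable {S : Type*} [MeasurableSpace S] [MetricSpace S] {ν₁ ν₂ : Measure S}

lemma wassDist_nonneg : 0 ≤ wassDist ν₁ ν₂ := by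
  refine Real.sSup_nonneg ?_
  rintro _ ⟨f, -, rfl⟩
  exact abs_nonneg _

variable [OpensMeasurableSpace S] {K : ℝ≥0} {f : S → ℝ}

namespace FiniteFirstMoment

lemma integrable_of_lipschitzWith {ν : Measure S} (hν : FiniteFirstMoment ν)
    (hf : LipschitzWith K f) : Integrable f ν := by
  obtain ⟨_, a, ha⟩ := hν
  refine ((integrable_const |f a|).add (ha.const_mul K)).mono' hf.continuous.aestronglyMeasurable
    (ae_of_all _ fun x => ?_)
  have hdist := hf.dist_le_mul a x
  rw [dist_comm (f a)] at hdist
  exact (norm_le_norm_add_norm_sub' (f x) (f a)).trans (add_le_add le_rfl hdist)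

lemma integrable_dist {ν : Measure S} (hν : FiniteFirstMoment ν) (a : S) :
    Integrable (fun x => dist a x) ν :=
  hν.integrable_of_lipschitzWith (LipschitzWith.dist_right a)

lemma dirac (x : S) : FiniteFirstMoment (Measure.dirac x) :=
  ⟨inferInstance, x, integrable_dirac (by simp)⟩

lemma abs_integral_sub_apply_le {ν : Measure S} (hν : FiniteFirstMoment ν)
    (hf : LipschitzWith 1 f) (a : S) : |∫ x, f x ∂ν - f a| ≤ ∫ x, dist a x ∂ν := by
  have := hν.1
  have hcenter : ∫ x, f x ∂ν - f a = ∫ x, (f x - f a) ∂ν := by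
    rw [integral_sub (hν.integrable_of_lipschitzWith hf) (integrable_const _)]
    simp
  rw [hcenter]
  refine abs_integral_le_integral_abs.trans (integral_mono_of_nonneg
    (ae_of_all _ fun _ => abs_nonneg _) (hν.integrable_dist a) (ae_of_all _ fun x => ?_))
  simpa only [NNReal.coe_one, one_mul, dist_comm x, Real.dist_eq] using hf.dist_le_mul x a

lemma abs_integral_sub_integral_le (h₁ : FiniteFirstMoment ν₁) (h₂ : FiniteFirstMoment ν₂)
    (hf : LipschitzWith 1 f) (a : S) :
    |∫ x, f x ∂ν₁ - ∫ x, f x ∂ν₂| ≤ ∫ x, dist a x ∂ν₁ + ∫ x, dist a x ∂ν₂ :=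
  (abs_sub_le _ (f a) _).trans (add_le_add (h₁.abs_integral_sub_apply_le hf a)
    (abs_sub_comm (f a) _ ▸ h₂.abs_integral_sub_apply_le hf a))

lemma wassDist_le (h₁ : FiniteFirstMoment ν₁) (h₂ : FiniteFirstMoment ν₂) (a : S) :
    wassDist ν₁ ν₂ ≤ ∫ x, dist a x ∂ν₁ + ∫ x, dist a x ∂ν₂ := by
  refine Real.sSup_le ?_
    (add_nonneg (integral_nonneg fun _ => dist_nonneg) (integral_nonneg fun _ => dist_nonneg))
  rintro _ ⟨f, hf, rfl⟩
  exact h₁.abs_integral_sub_integral_le h₂ hf a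

lemma abs_integral_sub_le_wassDist (h₁ : FiniteFirstMoment ν₁) (h₂ : FiniteFirstMoment ν₂)
    (hf : LipschitzWith 1 f) : |∫ x, f x ∂ν₁ - ∫ x, f x ∂ν₂| ≤ wassDist ν₁ ν₂ := by
  obtain ⟨a, -⟩ := h₁.2
  refine le_csSup ⟨∫ x, dist a x ∂ν₁ + ∫ x, dist a x ∂ν₂, ?_⟩ ⟨f, hf, rfl⟩
  rintro _ ⟨g, hg, rfl⟩
  exact h₁.abs_integral_sub_integral_le h₂ hg a

lemma abs_integral_sub_le_mul_wassDist (h₁ : FiniteFirstMoment ν₁) (h₂ : FiniteFirstMoment ν₂)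
    (hf : LipschitzWith K f) : |∫ x, f x ∂ν₁ - ∫ x, f x ∂ν₂| ≤ K * wassDist ν₁ ν₂ := by
  have := h₁.1
  have := h₂.1
  rcases eq_or_ne K 0 with rfl | hK
  · obtain ⟨a, -⟩ := h₁.2
    have hconst : f = fun _ => f a :=
      funext fun x => edist_le_zero.1 (by simpa using hf x a)
    rw [hconst]
    simp
  · have hscaled : LipschitzWith 1 fun x => (K : ℝ)⁻¹ * f x := by
      refine LipschitzWith.of_dist_le_mul fun x y => ?_
      rw [Real.dist_eq, ← mul_sub, abs_mul, abs_of_nonneg (by positivity), ← Real.dist_eq,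
        inv_mul_le_iff₀ (by positivity), NNReal.coe_one, one_mul]
      exact hf.dist_le_mul x y
    have hle := h₁.abs_integral_sub_le_wassDist h₂ hscaled
    rwa [integral_const_mul, integral_const_mul, ← mul_sub, abs_mul,
      abs_of_nonneg (by positivity), inv_mul_le_iff₀ (by positivity)] at hle

end FiniteFirstMoment

lemma wassDist_dirac_le (x y : S) : wassDist (Measure.dirac x) (Measure.dirac y) ≤ dist x y := by
  refine Real.sSup_le ?_ dist_nonneg
  rintro _ ⟨f, hf, rfl⟩
  simpa [Real.dist_eq] using hf.dist_le_mul x y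

end Wasserstein

section Contraction

lemma Pmeas_dirac {S : Type*} [MeasurableSpace S] (π : Kernel S S) (x : S) :
    Pmeas π (Measure.dirac x) = π x :=
  Measure.dirac_bind π.measurable x

lemma integral_Pmeas {S : Type*} [MeasurableSpace S] {π : Kernel S S} {ν : Measure S} {f : S → ℝ}
    (hf : Integrable f (Pmeas π ν)) : ∫ x, f x ∂(Pmeas π ν) = ∫ x, Pfun π f x ∂ν := by
  have hcomp : Pmeas π ν = (π ∘ₖ Kernel.const Unit ν) () := Measure.comp_eq_comp_const_apply
  rw [hcomp] at hf ⊢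
  rw [Kernel.integral_comp hf, Kernel.const_apply]
  rfl

/-- The Markov operator of `π` preserves `M_{1,1}` and its `n`-th iterate shrinks Wasserstein
distances by the factor `C * γ ^ n` with `γ < 1`. Asking for this also at `n = 0` costs nothing:
it only amounts to replacing `C` by `max 1 C`. -/
structure IsWassersteinContraction {S : Type*} [MeasurableSpace S] [MetricSpace S]
    (π : Kernel S S) (C γ : ℝ≥0) : Prop where
  lt_one : γ < 1
  finiteFirstMoment_Pmeas : ∀ {ν : Measure S}, FiniteFirstMoment ν → FiniteFirstMoment (Pmeas π ν)
  wassDist_iterate_le : ∀ (n : ℕ) {ν₁ ν₂ : Measure S}, FiniteFirstMoment ν₁ →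
    FiniteFirstMoment ν₂ →
    wassDist ((Pmeas π)^[n] ν₁) ((Pmeas π)^[n] ν₂) ≤ C * γ ^ n * wassDist ν₁ ν₂

lemma IsWassersteinContraction.of_one_le {S : Type*} [MeasurableSpace S] [MetricSpace S]
    {π : Kernel S S} {γ c : ℝ} (hγ : γ ∈ Set.Ico (0 : ℝ) 1)
    (hP : ∀ ν : Measure S, FiniteFirstMoment ν → FiniteFirstMoment (Pmeas π ν))
    (hW : ∀ n : ℕ, 1 ≤ n → ∀ ν₁ ν₂ : Measure S, FiniteFirstMoment ν₁ → FiniteFirstMoment ν₂ →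
      wassDist ((Pmeas π)^[n] ν₁) ((Pmeas π)^[n] ν₂) ≤ c * γ ^ n * wassDist ν₁ ν₂) :
    IsWassersteinContraction π (max 1 c.toNNReal) γ.toNNReal where
  lt_one := Real.toNNReal_lt_one.2 hγ.2
  finiteFirstMoment_Pmeas {ν} := hP ν
  wassDist_iterate_le n ν₁ ν₂ h₁ h₂ := by
    rw [Real.coe_toNNReal γ hγ.1]
    rcases n.eq_zero_or_pos with rfl | hn
    · have hC : (1 : ℝ) ≤ (max 1 c.toNNReal : ℝ≥0) := by exact_mod_cast le_max_left _ _
      simpa using le_mul_of_one_le_left wassDist_nonneg hC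
    · have hC : c ≤ (max 1 c.toNNReal : ℝ≥0) :=
        (Real.le_coe_toNNReal c).trans (by exact_mod_cast le_max_right _ _)
      exact (hW n hn ν₁ ν₂ h₁ h₂).trans (mul_le_mul_of_nonneg_right
        (mul_le_mul_of_nonneg_right hC (pow_nonneg hγ.1 n)) wassDist_nonneg)

namespace IsWassersteinContraction

variable {S : Type*} [MeasurableSpace S] [MetricSpace S]
  {π : Kernel S S} {C γ K : ℝ≥0} {ν μstar : Measure S} {f : S → ℝ}

lemma finiteFirstMoment_iterate (h : IsWassersteinContraction π C γ) (hν : FiniteFirstMoment ν)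
    (n : ℕ) : FiniteFirstMoment ((Pmeas π)^[n] ν) := by
  induction n with
  | zero => exact hν
  | succ n ih =>
    rw [Function.iterate_succ_apply']
    exact h.finiteFirstMoment_Pmeas ih

variable [OpensMeasurableSpace S]

lemma finiteFirstMoment_kernel (h : IsWassersteinContraction π C γ) (x : S) :
    FiniteFirstMoment (π x) :=
  Pmeas_dirac π x ▸ h.finiteFirstMoment_Pmeas (.dirac x)

lemma abs_integral_iterate_sub_le (h : IsWassersteinContraction π C γ) (n : ℕ) {ν₁ ν₂ : Measure S}
    (h₁ : FiniteFirstMoment ν₁) (h₂ : FiniteFirstMoment ν₂) (hf : LipschitzWith K f) :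
    |∫ y, f y ∂(Pmeas π)^[n] ν₁ - ∫ y, f y ∂(Pmeas π)^[n] ν₂| ≤
      K * (C * γ ^ n * wassDist ν₁ ν₂) :=
  ((h.finiteFirstMoment_iterate h₁ n).abs_integral_sub_le_mul_wassDist
    (h.finiteFirstMoment_iterate h₂ n) hf).trans
    (mul_le_mul_of_nonneg_left (h.wassDist_iterate_le n h₁ h₂) K.2)

lemma lipschitzWith_integral_iterate_dirac (h : IsWassersteinContraction π C γ) (n : ℕ)
    (hf : LipschitzWith K f) :
    LipschitzWith (K * (C * γ ^ n)) fun x => ∫ y, f y ∂(Pmeas π)^[n] (Measure.dirac x) := by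
  refine LipschitzWith.of_dist_le_mul fun x y => ?_
  refine (h.abs_integral_iterate_sub_le n (.dirac x) (.dirac y) hf).trans ?_
  push_cast
  rw [mul_assoc (K : ℝ)]
  gcongr
  exact wassDist_dirac_le x y

lemma lipschitzWith_Pfun (h : IsWassersteinContraction π C γ) (hf : LipschitzWith K f) :
    LipschitzWith (K * (C * γ)) (Pfun π f) := by
  simpa [Pmeas_dirac] using! h.lipschitzWith_integral_iterate_dirac 1 hf

lemma integral_iterate_Pmeas (h : IsWassersteinContraction π C γ) (hν : FiniteFirstMoment ν)
    (hf : LipschitzWith K f) (n : ℕ) :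
    ∫ x, f x ∂(Pmeas π)^[n] ν = ∫ x, (Pfun π)^[n] f x ∂ν := by
  induction n generalizing f K with
  | zero => rfl
  | succ n ih =>
    rw [Function.iterate_succ_apply', Function.iterate_succ_apply, ← ih (h.lipschitzWith_Pfun hf),
      integral_Pmeas ((h.finiteFirstMoment_Pmeas
        (h.finiteFirstMoment_iterate hν n)).integrable_of_lipschitzWith hf)]

lemma iterate_Pfun_eq_integral (h : IsWassersteinContraction π C γ) (hf : LipschitzWith K f)
    (n : ℕ) (x : S) : (Pfun π)^[n] f x = ∫ y, f y ∂(Pmeas π)^[n] (Measure.dirac x) := by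
  rw [h.integral_iterate_Pmeas (.dirac x) hf, integral_dirac]

lemma lipschitzWith_iterate_Pfun (h : IsWassersteinContraction π C γ) (hf : LipschitzWith K f)
    (n : ℕ) : LipschitzWith (K * (C * γ ^ n)) ((Pfun π)^[n] f) := by
  simpa only [← h.iterate_Pfun_eq_integral hf] using h.lipschitzWith_integral_iterate_dirac n hf

lemma abs_integral_iterate_sub_invariant_le (h : IsWassersteinContraction π C γ)
    (hν : FiniteFirstMoment ν) (hμstar : FiniteFirstMoment μstar) (hinv : Pmeas π μstar = μstar)
    (hf : LipschitzWith K f) (n : ℕ) :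
    |∫ y, f y ∂(Pmeas π)^[n] ν - ∫ y, f y ∂μstar| ≤ K * (C * γ ^ n * wassDist ν μstar) := by
  simpa only [Function.iterate_fixed hinv] using h.abs_integral_iterate_sub_le n hν hμstar hf

lemma abs_iterate_Pfun_sub_le (h : IsWassersteinContraction π C γ)
    (hμstar : FiniteFirstMoment μstar) (hinv : Pmeas π μstar = μstar)
    (hf : LipschitzWith K f) (n : ℕ) (a x : S) :
    |(Pfun π)^[n] f x - ∫ y, f y ∂μstar| ≤
      K * (C * γ ^ n * (dist a x + ∫ y, dist a y ∂μstar)) := by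
  rw [h.iterate_Pfun_eq_integral hf]
  refine (h.abs_integral_iterate_sub_invariant_le (.dirac x) hμstar hinv hf n).trans ?_
  gcongr
  exact ((FiniteFirstMoment.dirac x).wassDist_le hμstar a).trans_eq (by rw [integral_dirac])

lemma integral_dist_iterate_le (h : IsWassersteinContraction π C γ) (hν : FiniteFirstMoment ν)
    (hμstar : FiniteFirstMoment μstar) (hinv : Pmeas π μstar = μstar) (a : S) (n : ℕ) :
    ∫ x, dist a x ∂(Pmeas π)^[n] ν ≤ ∫ x, dist a x ∂μstar + C * wassDist ν μstar := by
  have hdiff :=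
    h.abs_integral_iterate_sub_invariant_le hν hμstar hinv (LipschitzWith.dist_right a) n
  have hγ : (γ : ℝ) ^ n ≤ 1 := pow_le_one₀ γ.2 (by exact_mod_cast h.lt_one.le)
  have hdecay : (C : ℝ) * γ ^ n * wassDist ν μstar ≤ C * wassDist ν μstar :=
    mul_le_mul_of_nonneg_right (mul_le_of_le_one_right C.2 hγ) wassDist_nonneg
  rw [NNReal.coe_one, one_mul] at hdiff
  linarith [(abs_le.1 hdiff).2]

lemma summable_iterate_Pfun (h : IsWassersteinContraction π C γ)
    (hμstar : FiniteFirstMoment μstar) (hinv : Pmeas π μstar = μstar)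
    (hf : LipschitzWith K f) (hf0 : ∫ x, f x ∂μstar = 0) (x : S) :
    Summable fun n => (Pfun π)^[n] f x := by
  refine Summable.of_norm_bounded (g := fun n : ℕ =>
    (K : ℝ) * (C * γ ^ n * (dist x x + ∫ y, dist x y ∂μstar))) ?_ fun n => ?_
  · exact (((summable_geometric_of_lt_one γ.2 h.lt_one).mul_left _).mul_right _).mul_left _
  · simpa only [hf0, sub_zero, ← Real.norm_eq_abs] using
      h.abs_iterate_Pfun_sub_le hμstar hinv hf n x x

lemma lipschitzWith_chiFun (h : IsWassersteinContraction π C γ)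
    (hμstar : FiniteFirstMoment μstar) (hinv : Pmeas π μstar = μstar)
    (hf : LipschitzWith K f) (hf0 : ∫ x, f x ∂μstar = 0) :
    LipschitzWith (K * (C * (1 - γ)⁻¹)) (chiFun π f) := by
  refine LipschitzWith.of_dist_le_mul fun x y => ?_
  have hsum := h.summable_iterate_Pfun hμstar hinv hf hf0
  have hgeom : HasSum (fun n : ℕ => ((K * (C * γ ^ n) : ℝ≥0) : ℝ) * dist x y)
      ((K * (C * (1 - γ)⁻¹) : ℝ≥0) * dist x y) := by
    push_cast [NNReal.coe_sub h.lt_one.le]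
    exact (((hasSum_geometric_of_lt_one γ.2 h.lt_one).mul_left _).mul_left _).mul_right _
  rw [dist_eq_norm, chiFun, chiFun, ← (hsum x).tsum_sub (hsum y)]
  refine tsum_of_norm_bounded hgeom fun n => ?_
  rw [← dist_eq_norm]
  exact (h.lipschitzWith_iterate_Pfun hf n).dist_le_mul x y

end IsWassersteinContraction

end Contraction

section OneStepMean

variable {S : Type*} [MeasurableSpace S] {π : Kernel S S} {F : S × S → ℝ}

/-- The conditional mean `x ↦ ∫ F(x, y) π(x, dy)` of `F(X_n, X_{n+1})` given `X_n = x`. -/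
noncomputable def oneStepMean (π : Kernel S S) (F : S × S → ℝ) (x : S) : ℝ :=
  ∫ y, F (x, y) ∂(π x)

lemma measurable_oneStepMean [IsSFiniteKernel π] (hF : Measurable F) :
    Measurable (oneStepMean π F) :=
  hF.stronglyMeasurable.integral_kernel_prod_right'.measurable

variable [MetricSpace S] [OpensMeasurableSpace S]
  {C γ K : ℝ≥0} {ν μstar : Measure S}

lemma FiniteFirstMoment.of_fst_of_snd {ρ : Measure (S × S)} (h₁ : FiniteFirstMoment ρ.fst)
    (h₂ : FiniteFirstMoment ρ.snd) : FiniteFirstMoment ρ := by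
  obtain ⟨a, -⟩ := h₁.2
  refine ⟨⟨by rw [← Measure.fst_univ, h₁.1.measure_univ]⟩, (a, a), ?_⟩
  have hfst : Integrable (fun z => dist a z.1) ρ :=
    (h₁.integrable_dist a).comp_measurable measurable_fst
  have hsnd : Integrable (fun z => dist a z.2) ρ :=
    (h₂.integrable_dist a).comp_measurable measurable_snd
  simpa only [Prod.dist_eq] using! hfst.sup hsnd

namespace IsWassersteinContraction

lemma finiteFirstMoment_compProd [IsSFiniteKernel π] (h : IsWassersteinContraction π C γ)
    (hν : FiniteFirstMoment ν) : FiniteFirstMoment (ν ⊗ₘ π) := by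
  have := hν.1
  have : IsMarkovKernel π := ⟨fun x => (h.finiteFirstMoment_kernel x).1⟩
  refine .of_fst_of_snd (by rwa [Measure.fst_compProd]) ?_
  rw [Measure.snd_compProd]
  exact h.finiteFirstMoment_Pmeas hν

lemma lipschitzWith_oneStepMean (h : IsWassersteinContraction π C γ) (hF : LipschitzWith K F) :
    LipschitzWith (K * (1 + C * γ)) (oneStepMean π F) := by
  refine LipschitzWith.of_dist_le_mul fun x x' => ?_
  have hsection : ∀ u, LipschitzWith K fun y => F (u, y) := fun u => by
    simpa using! hF.comp (LipschitzWith.prodMk_left u)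
  have := (h.finiteFirstMoment_kernel x).1
  have hint : ∀ u, Integrable (fun y => F (u, y)) (π x) := fun u =>
    (h.finiteFirstMoment_kernel x).integrable_of_lipschitzWith (hsection u)
  have hintegrand : dist (∫ y, F (x, y) ∂π x) (∫ y, F (x', y) ∂π x) ≤ K * dist x x' := by
    rw [dist_eq_norm, ← integral_sub (hint x) (hint x')]
    refine (norm_integral_le_of_norm_le_const (ae_of_all _ fun y => ?_)).trans_eq
      (by rw [probReal_univ, mul_one])
    rw [← dist_eq_norm]
    simpa [Prod.dist_eq] using hF.dist_le_mul (x, y) (x', y)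
  have hkernel : dist (∫ y, F (x', y) ∂π x) (∫ y, F (x', y) ∂π x') ≤ K * (C * γ) * dist x x' := by
    simpa using! (h.lipschitzWith_Pfun (hsection x')).dist_le_mul x x'
  calc dist (oneStepMean π F x) (oneStepMean π F x')
      ≤ K * dist x x' + K * (C * γ) * dist x x' :=
        (dist_triangle _ _ _).trans (add_le_add hintegrand hkernel)
    _ = (K * (1 + C * γ) : ℝ≥0) * dist x x' := by push_cast; ring

variable [SecondCountableTopology S] [IsSFiniteKernel π]

lemma integral_compProd_eq_integral_oneStepMean
    (h : IsWassersteinContraction π C γ) (hν : FiniteFirstMoment ν) (hF : LipschitzWith K F) :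
    ∫ z, F z ∂(ν ⊗ₘ π) = ∫ x, oneStepMean π F x ∂ν := by
  have := hν.1
  exact Measure.integral_compProd
    ((h.finiteFirstMoment_compProd hν).integrable_of_lipschitzWith hF)

lemma tendsto_integral_iterate_compProd (h : IsWassersteinContraction π C γ)
    (hν : FiniteFirstMoment ν) (hμstar : FiniteFirstMoment μstar) (hinv : Pmeas π μstar = μstar)
    (hF : LipschitzWith K F) :
    Tendsto (fun n => ∫ z, F z ∂((Pmeas π)^[n] ν ⊗ₘ π)) atTop (𝓝 (∫ z, F z ∂(μstar ⊗ₘ π))) := by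
  rw [tendsto_iff_norm_sub_tendsto_zero]
  have hbound : Tendsto (fun n : ℕ => ((K * (1 + C * γ) : ℝ≥0) : ℝ) *
      (C * γ ^ n * wassDist ν μstar)) atTop (𝓝 0) := by
    simpa using (((tendsto_pow_atTop_nhds_zero_of_lt_one γ.2 h.lt_one).const_mul (C : ℝ)).mul_const
      (wassDist ν μstar)).const_mul ((K * (1 + C * γ) : ℝ≥0) : ℝ)
  refine squeeze_zero (fun _ => norm_nonneg _) (fun n => ?_) hbound
  rw [h.integral_compProd_eq_integral_oneStepMean (h.finiteFirstMoment_iterate hν n) hF,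
    h.integral_compProd_eq_integral_oneStepMean hμstar hF]
  exact h.abs_integral_iterate_sub_invariant_le hν hμstar hinv (h.lipschitzWith_oneStepMean hF) n

end IsWassersteinContraction

end OneStepMean

section MarkovChain

variable {S : Type*} [MeasurableSpace S]

lemma measurable_eval_succ_pair (n : ℕ) : Measurable fun ω : ℕ → S => (ω n, ω (n + 1)) :=
  (measurable_pi_apply n).prodMk (measurable_pi_apply (n + 1))

variable [MetricSpace S] [SecondCountableTopology S] [BorelSpace S]

lemma measurable_eval_natFilt {k n : ℕ} (hkn : k ≤ n) :
    Measurable[natFilt n] fun ω : ℕ → S => ω k :=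
  (Filtration.stronglyAdapted_natural
    (fun k => (measurable_pi_apply (X := fun _ => S) k).stronglyMeasurable) k).measurable.mono
    (natFilt.mono hkn) le_rfl

namespace IsMarkovChainLaw

variable {π : Kernel S S} [IsMarkovKernel π] {ν μstar : Measure S} {P : Measure (ℕ → S)}
  {f : S → ℝ} {F : S × S → ℝ} {C γ K : ℝ≥0}

lemma measure_inter_succ_mem (hP : IsMarkovChainLaw π ν P) (n : ℕ) {A : Set (ℕ → S)}
    (hA : MeasurableSet[natFilt n] A) {t : Set S} (ht : MeasurableSet t) :
    P (A ∩ {ω | ω (n + 1) ∈ t}) = ∫⁻ ω in A, π (ω n) t ∂P := by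
  have := hP.prob
  have hA' : MeasurableSet A := natFilt.le n A hA
  have hsucc : MeasurableSet {ω : ℕ → S | ω (n + 1) ∈ t} := measurable_pi_apply (n + 1) ht
  have hbdd : IsBounded (Set.range (t.indicator (1 : S → ℝ))) :=
    (Metric.isBounded_Icc 0 1).subset (by rintro _ ⟨x, rfl⟩; by_cases hx : x ∈ t <;> simp [hx])
  have hcond : P[{ω | ω (n + 1) ∈ t}.indicator (1 : (ℕ → S) → ℝ) | natFilt n] =ᵐ[P]
      fun ω => (π (ω n)).real t := by
    simpa [integral_indicator_one ht] using!
      hP.markov n (t.indicator 1) (measurable_one.indicator ht) hbdd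
  have hreal : P.real (A ∩ {ω | ω (n + 1) ∈ t}) = ∫ ω in A, (π (ω n)).real t ∂P := by
    rw [← setIntegral_congr_ae hA' (hcond.mono fun ω hω _ => hω),
      setIntegral_condExp (natFilt.le n) ((integrable_const 1).indicator hsucc) hA,
      setIntegral_indicator hsucc]
    simp
  have hmeas : Measurable fun ω : ℕ → S => π (ω n) t :=
    (Kernel.measurable_coe π ht).comp (measurable_pi_apply n)
  simp only [measureReal_def] at hreal
  rw [← ENNReal.ofReal_toReal (measure_ne_top P _), hreal, integral_toReal hmeas.aemeasurable
    (ae_of_all _ fun ω => measure_lt_top _ _), ENNReal.ofReal_toReal]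
  exact ((setLIntegral_mono measurable_const fun ω _ => prob_le_one).trans_lt (by simp)).ne

lemma map_restrict_pair (hP : IsMarkovChainLaw π ν P) (n : ℕ) {A : Set (ℕ → S)}
    (hA : MeasurableSet[natFilt n] A) :
    (P.restrict A).map (fun ω => (ω n, ω (n + 1))) =
      (P.restrict A).map (fun ω => ω n) ⊗ₘ π := by
  have := hP.prob
  refine Measure.ext_prod fun {s t} hs ht => ?_
  have hs' : MeasurableSet ((fun ω : ℕ → S => ω n) ⁻¹' s) := measurable_pi_apply n hs
  rw [Measure.compProd_apply_prod hs ht, setLIntegral_map hs (Kernel.measurable_coe π ht)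
    (measurable_pi_apply n), Measure.map_apply (measurable_eval_succ_pair n) (hs.prod ht),
    Measure.restrict_apply (measurable_eval_succ_pair n (hs.prod ht)),
    Measure.restrict_restrict hs']
  rw [Set.inter_comm, Set.mk_preimage_prod, ← Set.inter_assoc]
  exact (hP.measure_inter_succ_mem n (hA.inter (measurable_eval_natFilt le_rfl hs)) ht).trans
    (by rw [Set.inter_comm])

lemma map_eval (hP : IsMarkovChainLaw π ν P) (n : ℕ) :
    P.map (fun ω => ω n) = (Pmeas π)^[n] ν := by
  have := hP.prob
  induction n with
  | zero => exact hP.init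
  | succ n ih =>
    have hpair := hP.map_restrict_pair n .univ
    rw [Measure.restrict_univ, ih] at hpair
    have : IsProbabilityMeasure ((Pmeas π)^[n] ν) :=
      ih ▸ Measure.isProbabilityMeasure_map (measurable_pi_apply n).aemeasurable
    rw [Function.iterate_succ_apply', Pmeas, ← Measure.snd_compProd, ← hpair, Measure.snd,
      Measure.map_map measurable_snd (measurable_eval_succ_pair n)]
    rfl

lemma map_pair (hP : IsMarkovChainLaw π ν P) (n : ℕ) :
    P.map (fun ω => (ω n, ω (n + 1))) = (Pmeas π)^[n] ν ⊗ₘ π := by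
  simpa only [Measure.restrict_univ, hP.map_eval n] using hP.map_restrict_pair n .univ

lemma integral_pair (hP : IsMarkovChainLaw π ν P) (hF : Measurable F) (n : ℕ) :
    ∫ ω, F (ω n, ω (n + 1)) ∂P = ∫ z, F z ∂((Pmeas π)^[n] ν ⊗ₘ π) := by
  rw [← hP.map_pair n, integral_map (measurable_eval_succ_pair n).aemeasurable
    hF.aestronglyMeasurable]

lemma condExp_pair (hP : IsMarkovChainLaw π ν P) (hF : Measurable F) (n : ℕ)
    (hint : Integrable (fun ω => F (ω n, ω (n + 1))) P) :
    P[fun ω => F (ω n, ω (n + 1)) | natFilt n] =ᵐ[P] fun ω => oneStepMean π F (ω n) := by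
  have := hP.prob
  have hpair : ∀ {A : Set (ℕ → S)}, MeasurableSet[natFilt n] A →
      Integrable F ((P.restrict A).map (fun ω => ω n) ⊗ₘ π) := fun {A} hA => by
    rw [← hP.map_restrict_pair n hA, integrable_map_measure hF.aestronglyMeasurable
      (measurable_eval_succ_pair n).aemeasurable]
    exact hint.integrableOn
  have hmean := measurable_oneStepMean (π := π) hF
  refine (ae_eq_condExp_of_forall_setIntegral_eq (natFilt.le n) hint (fun A hA _ => ?_)
    (fun A hA _ => ?_)
    (hmean.comp (measurable_eval_natFilt le_rfl)).stronglyMeasurable.aestronglyMeasurable).symm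
  · refine Integrable.comp_measurable (g := oneStepMean π F) ?_ (measurable_pi_apply n)
    exact (Measure.integrable_compProd_iff hF.aestronglyMeasurable |>.1 (hpair hA)).2.mono'
      hmean.aestronglyMeasurable (ae_of_all _ fun x => norm_integral_le_integral_norm _)
  · refine (integral_map (measurable_pi_apply n).aemeasurable
      hmean.aestronglyMeasurable).symm.trans ?_
    refine (Measure.integral_compProd (hpair hA)).symm.trans ?_
    rw [← hP.map_restrict_pair n hA, integral_map (measurable_eval_succ_pair n).aemeasurable
      hF.aestronglyMeasurable]

lemma condExp_add (hP : IsMarkovChainLaw π ν P) (hf : Measurable f)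
    (hint : ∀ k, Integrable (fun ω => f (ω k)) P) (n j : ℕ) :
    P[fun ω => f (ω (n + j)) | natFilt n] =ᵐ[P] fun ω => (Pfun π)^[j] f (ω n) := by
  have := hP.prob
  induction j generalizing f with
  | zero =>
    exact (condExp_of_stronglyMeasurable (natFilt.le n)
      (hf.comp (measurable_eval_natFilt le_rfl)).stronglyMeasurable (hint n)).eventuallyEq
  | succ j ih =>
    have hstep : ∀ k, P[fun ω => f (ω (k + 1)) | natFilt k] =ᵐ[P] fun ω => Pfun π f (ω k) :=
      fun k => hP.condExp_pair (hf.comp measurable_snd) k (hint (k + 1))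
    calc P[fun ω => f (ω (n + j + 1)) | natFilt n]
        =ᵐ[P] P[P[fun ω => f (ω (n + j + 1)) | natFilt (n + j)] | natFilt n] :=
          (condExp_condExp_of_le (natFilt.mono (Nat.le_add_right n j)) (natFilt.le _)).symm
      _ =ᵐ[P] P[fun ω => Pfun π f (ω (n + j)) | natFilt n] := condExp_congr_ae (hstep (n + j))
      _ =ᵐ[P] fun ω => (Pfun π)^[j] (Pfun π f) (ω n) :=
          ih (measurable_oneStepMean (hf.comp measurable_snd)) fun k =>
            integrable_condExp.congr (hstep k)

lemma condExp_pair_add (hP : IsMarkovChainLaw π ν P) (hF : Measurable F)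
    (hint : ∀ k, Integrable (fun ω => F (ω k, ω (k + 1))) P) (n j : ℕ) :
    P[fun ω => F (ω (n + j), ω (n + j + 1)) | natFilt n] =ᵐ[P]
      fun ω => (Pfun π)^[j] (oneStepMean π F) (ω n) := by
  have := hP.prob
  have hmean := fun k => hP.condExp_pair hF k (hint k)
  calc P[fun ω => F (ω (n + j), ω (n + j + 1)) | natFilt n]
      =ᵐ[P] P[P[fun ω => F (ω (n + j), ω (n + j + 1)) | natFilt (n + j)] | natFilt n] :=
        (condExp_condExp_of_le (natFilt.mono (Nat.le_add_right n j)) (natFilt.le _)).symm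
    _ =ᵐ[P] P[fun ω => oneStepMean π F (ω (n + j)) | natFilt n] := condExp_congr_ae (hmean (n + j))
    _ =ᵐ[P] fun ω => (Pfun π)^[j] (oneStepMean π F) (ω n) :=
        hP.condExp_add (measurable_oneStepMean hF)
          (fun k => integrable_condExp.congr (hmean k)) n j

end IsMarkovChainLaw

end MarkovChain

section Correlations

variable {S : Type*} [MeasurableSpace S] [MetricSpace S] [SecondCountableTopology S]
  [BorelSpace S] {π : Kernel S S} [IsMarkovKernel π] {ν μstar : Measure S}
  {P : Measure (ℕ → S)} {F : S × S → ℝ} {C γ K : ℝ≥0}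

namespace IsMarkovChainLaw

lemma integrable_dist_eval (hP : IsMarkovChainLaw π ν P) (h : IsWassersteinContraction π C γ)
    (hν : FiniteFirstMoment ν) (a : S) (n : ℕ) : Integrable (fun ω => dist a (ω n)) P := by
  have hint := (h.finiteFirstMoment_iterate hν n).integrable_dist a
  rw [← hP.map_eval n] at hint
  exact hint.comp_measurable (measurable_pi_apply n)

lemma integral_dist_eval_le (hP : IsMarkovChainLaw π ν P) (h : IsWassersteinContraction π C γ)
    (hν : FiniteFirstMoment ν) (hμstar : FiniteFirstMoment μstar) (hinv : Pmeas π μstar = μstar)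
    (a : S) (n : ℕ) :
    ∫ ω, dist a (ω n) ∂P ≤ ∫ x, dist a x ∂μstar + C * wassDist ν μstar := by
  refine le_of_eq_of_le ?_ (h.integral_dist_iterate_le hν hμstar hinv a n)
  rw [← hP.map_eval n, integral_map (measurable_pi_apply n).aemeasurable
    (LipschitzWith.dist_right a).continuous.aestronglyMeasurable]

lemma integrable_pair (hP : IsMarkovChainLaw π ν P) (h : IsWassersteinContraction π C γ)
    (hν : FiniteFirstMoment ν) (hF : LipschitzWith K F) (n : ℕ) :
    Integrable (fun ω => F (ω n, ω (n + 1))) P := by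
  have hint := (h.finiteFirstMoment_compProd
    (h.finiteFirstMoment_iterate hν n)).integrable_of_lipschitzWith hF
  rw [← hP.map_pair n] at hint
  exact hint.comp_measurable (measurable_eval_succ_pair n)

lemma integral_abs_condExp_pair_add_le (hP : IsMarkovChainLaw π ν P)
    (h : IsWassersteinContraction π C γ) (hν : FiniteFirstMoment ν)
    (hμstar : FiniteFirstMoment μstar) (hinv : Pmeas π μstar = μstar) (hF : LipschitzWith K F)
    (hF0 : ∫ z, F z ∂(μstar ⊗ₘ π) = 0) (a : S) (n j : ℕ) :
    ∫ ω, |(P[fun ω => F (ω (n + j), ω (n + j + 1)) | natFilt n]) ω| ∂P ≤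
      K * (1 + C * γ) *
        (C * γ ^ j * (2 * ∫ x, dist a x ∂μstar + C * wassDist ν μstar)) := by
  have := hP.prob
  have hmean0 : ∫ x, oneStepMean π F x ∂μstar = 0 :=
    h.integral_compProd_eq_integral_oneStepMean hμstar hF ▸ hF0
  have hbound : ∀ᵐ ω ∂P, |(P[fun ω => F (ω (n + j), ω (n + j + 1)) | natFilt n]) ω| ≤
      K * (1 + C * γ) * (C * γ ^ j * (dist a (ω n) + ∫ y, dist a y ∂μstar)) := by
    filter_upwards [hP.condExp_pair_add hF.continuous.measurable (hP.integrable_pair h hν hF) n j]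
      with ω hω
    rw [hω]
    simpa [hmean0] using
      h.abs_iterate_Pfun_sub_le hμstar hinv (h.lipschitzWith_oneStepMean hF) j a (ω n)
  have hdist := hP.integrable_dist_eval h hν a n
  refine (integral_mono_ae integrable_condExp.abs
    (((hdist.add (integrable_const _)).const_mul _).const_mul _) hbound).trans ?_
  rw [integral_const_mul, integral_const_mul, integral_add' hdist (integrable_const _),
    integral_const, probReal_univ, one_smul]
  have hmoment := hP.integral_dist_eval_le h hν hμstar hinv a n
  exact mul_le_mul_of_nonneg_left (mul_le_mul_of_nonneg_left (by linarith) (by positivity))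
    (by positivity)

lemma abs_integral_pair_mul_pair_le (hP : IsMarkovChainLaw π ν P)
    (h : IsWassersteinContraction π C γ) (hν : FiniteFirstMoment ν)
    (hμstar : FiniteFirstMoment μstar) (hinv : Pmeas π μstar = μstar) (hF : LipschitzWith K F)
    (hF0 : ∫ z, F z ∂(μstar ⊗ₘ π) = 0) {B : ℝ} (hFB : ∀ z, |F z| ≤ B) (a : S) (k j : ℕ) :
    |∫ ω, F (ω k, ω (k + 1)) * F (ω (k + 1 + j), ω (k + 1 + j + 1)) ∂P| ≤
      B * (K * (1 + C * γ) *
        (C * γ ^ j * (2 * ∫ x, dist a x ∂μstar + C * wassDist ν μstar))) := by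
  have := hP.prob
  have hpast : StronglyMeasurable[natFilt (k + 1)] fun ω : ℕ → S => F (ω k, ω (k + 1)) :=
    (hF.continuous.measurable.comp ((measurable_eval_natFilt k.le_succ).prodMk
      (measurable_eval_natFilt le_rfl))).stronglyMeasurable
  refine (abs_integral_mul_le_integral_abs_condExp (natFilt.le (k + 1)) hpast
    (fun ω => hFB _) (hP.integrable_pair h hν hF (k + 1 + j))).trans ?_
  exact mul_le_mul_of_nonneg_left
    (hP.integral_abs_condExp_pair_add_le h hν hμstar hinv hF hF0 a (k + 1) j)
    ((abs_nonneg _).trans (hFB (a, a)))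

lemma exists_integral_sq_sum_pair_le (hP : IsMarkovChainLaw π ν P)
    (h : IsWassersteinContraction π C γ) (hν : FiniteFirstMoment ν)
    (hμstar : FiniteFirstMoment μstar) (hinv : Pmeas π μstar = μstar) :
    ∃ A : ℝ, 0 ≤ A ∧ ∀ {K : ℝ≥0} {B : ℝ} {F : S × S → ℝ}, LipschitzWith K F → (∀ z, |F z| ≤ B) →
      ∫ z, F z ∂(μstar ⊗ₘ π) = 0 → ∀ n : ℕ,
      ∫ ω, (∑ i ∈ Finset.range n, F (ω i, ω (i + 1))) ^ 2 ∂P ≤ n * (B ^ 2 + A * K * B) := by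
  have := hP.prob
  obtain ⟨a, -⟩ := hν.2
  set D : ℝ := 2 * ∫ x, dist a x ∂μstar + C * wassDist ν μstar with hD
  have hD0 : 0 ≤ D := add_nonneg (mul_nonneg zero_le_two (integral_nonneg fun _ => dist_nonneg))
    (mul_nonneg C.2 wassDist_nonneg)
  have hγ : (γ : ℝ) < 1 := by exact_mod_cast h.lt_one
  refine ⟨2 * ((1 + C * γ) * (C * D)) / (1 - γ),
    div_nonneg (by positivity) (sub_nonneg.2 hγ.le), fun {K B F} hF hFB hF0 n => ?_⟩
  have hB : 0 ≤ B := (abs_nonneg _).trans (hFB (a, a))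
  have hint : ∀ k, Integrable (fun ω : ℕ → S => F (ω k, ω (k + 1))) P :=
    hP.integrable_pair h hν hF
  have hsum := integral_sq_sum_le (P := P) (V := fun k ω => F (ω k, ω (k + 1))) (a := B ^ 2)
    (b := B * (K * (1 + C * γ) * (C * D))) (r := γ)
    (fun k l => (hint l).bdd_mul (hint k).aestronglyMeasurable (ae_of_all _ fun ω => hFB _))
    (by positivity) γ.2 hγ
    (fun k => (integral_mono_of_nonneg (ae_of_all _ fun _ => sq_nonneg _) (integrable_const (B ^ 2))
      (ae_of_all _ fun ω => sq_le_sq' (abs_le.1 (hFB _)).1 (abs_le.1 (hFB _)).2)).trans_eq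
      (by simp))
    (fun k j => ((le_abs_self _).trans
      (hP.abs_integral_pair_mul_pair_le h hν hμstar hinv hF hF0 hFB a k j)).trans_eq
      (by rw [← hD]; ring)) n
  exact hsum.trans_eq (by ring)

end IsMarkovChainLaw

end Correlations

section StrongLaw

variable {S : Type*} [MeasurableSpace S] [MetricSpace S] [SecondCountableTopology S]
  [BorelSpace S] {π : Kernel S S} [IsMarkovKernel π] {ν μstar : Measure S}
  {P : Measure (ℕ → S)} {G : S × S → ℝ} {C γ L : ℝ≥0} {δ M : ℝ}

namespace IsMarkovChainLaw

lemma exists_integral_abs_average_sq_sub_le (hP : IsMarkovChainLaw π ν P)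
    (h : IsWassersteinContraction π C γ) (hν : FiniteFirstMoment ν)
    (hμstar : FiniteFirstMoment μstar) (hinv : Pmeas π μstar = μstar) (hG : LipschitzWith L G)
    (hδ : 0 ≤ δ) (hMint : ∀ n, Integrable (fun ω => |G (ω n, ω (n + 1))| ^ (2 + δ)) P)
    (hM : ∀ n, ∫ ω, |G (ω n, ω (n + 1))| ^ (2 + δ) ∂P ≤ M) :
    ∃ A : ℝ, ∀ (R : ℝ≥0) (n : ℕ), 1 ≤ R → 0 < n →
      ∫ ω, |(∑ i ∈ Finset.range n, G (ω i, ω (i + 1)) ^ 2) / n -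
        ∫ z, truncSq R (G z) ∂(μstar ⊗ₘ π)| ∂P ≤ √(A * R ^ 4 / n) + R ^ (-δ) * M := by
  have := hP.prob
  have := hμstar.1
  obtain ⟨A, hA, hvar⟩ := hP.exists_integral_sq_sum_pair_le h hν hμstar hinv
  refine ⟨4 + 4 * A * L, fun R n hR hn => ?_⟩
  have hH : LipschitzWith (2 * R * L) fun z => truncSq R (G z) := (lipschitzWith_truncSq R).comp hG
  set m := ∫ z, truncSq R (G z) ∂(μstar ⊗ₘ π) with hm
  have hm_le : |m| ≤ R ^ 2 := by
    simpa using! norm_integral_le_of_norm_le_const (μ := μstar ⊗ₘ π)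
      (f := fun z => truncSq R (G z)) (ae_of_all _ fun z => abs_truncSq_le R (G z))
  have hF : LipschitzWith (2 * R * L) fun z => truncSq R (G z) - m := by
    simpa using! hH.sub (LipschitzWith.const m)
  have hFB : ∀ z, |truncSq R (G z) - m| ≤ 2 * (R : ℝ) ^ 2 := fun z =>
    (abs_sub _ _).trans ((add_le_add (abs_truncSq_le R _) hm_le).trans_eq (two_mul _).symm)
  have hF0 : ∫ z, (truncSq R (G z) - m) ∂(μstar ⊗ₘ π) = 0 := by
    rw [integral_sub ((h.finiteFirstMoment_compProd hμstar).integrable_of_lipschitzWith hH)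
      (integrable_const _)]
    simp [hm]
  have hR3 : (R : ℝ) ^ 3 ≤ R ^ 4 := pow_le_pow_right₀ hR (by norm_num)
  refine integral_abs_average_sub_le hn (fun i => integrable_sq_of_integrable_rpow
      (hP.integrable_pair h hν hG i).aestronglyMeasurable hδ (hMint i))
    (fun i => MemLp.of_bound (hP.integrable_pair h hν hH i).aestronglyMeasurable ((R : ℝ) ^ 2)
      (ae_of_all _ fun ω => abs_truncSq_le R _)) ((hvar hF hFB hF0 n).trans ?_)
    fun i => (integral_abs_sq_sub_truncSq_le hδ (hMint i) (zero_lt_one.trans_le hR)).trans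
      (mul_le_mul_of_nonneg_left (hM i) (Real.rpow_nonneg R.2 _))
  push_cast
  gcongr
  nlinarith [mul_le_mul_of_nonneg_left hR3 (mul_nonneg hA L.coe_nonneg)]

lemma tendsto_integral_truncSq (hP : IsMarkovChainLaw π ν P)
    (h : IsWassersteinContraction π C γ) (hν : FiniteFirstMoment ν)
    (hμstar : FiniteFirstMoment μstar) (hinv : Pmeas π μstar = μstar) (hG : LipschitzWith L G)
    (hδ : 0 ≤ δ) (hMint : ∀ n, Integrable (fun ω => |G (ω n, ω (n + 1))| ^ (2 + δ)) P)
    (hM : ∀ n, ∫ ω, |G (ω n, ω (n + 1))| ^ (2 + δ) ∂P ≤ M) {R : ℕ → ℝ≥0}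
    (hR : Tendsto R atTop atTop) :
    Tendsto (fun n => ∫ z, truncSq (R n) (G z) ∂(μstar ⊗ₘ π)) atTop
      (𝓝 (∫ z, G z ^ 2 ∂(μstar ⊗ₘ π))) := by
  have := hP.prob
  have hH : ∀ r, LipschitzWith (2 * r * L) fun z => truncSq r (G z) :=
    fun r => (lipschitzWith_truncSq r).comp hG
  have hbound : ∀ r, ∫ z, truncSq r (G z) ∂(μstar ⊗ₘ π) ≤ 1 + M := fun r => by
    refine le_of_tendsto' (h.tendsto_integral_iterate_compProd hν hμstar hinv (hH r)) fun k => ?_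
    rw [← hP.integral_pair (hH r).continuous.measurable k]
    refine (integral_mono (hP.integrable_pair h hν (hH r) k)
      ((integrable_const 1).add (hMint k)) fun ω => ?_).trans ?_
    · refine (truncSq_le_sq r _).trans ?_
      rw [← sq_abs]
      exact pow_le_one_add_rpow (abs_nonneg _) (by simpa using hδ)
    · rw [integral_add' (integrable_const 1) (hMint k)]
      simpa using hM k
  exact tendsto_integral_of_le_of_integral_le
    (fun n => (h.finiteFirstMoment_compProd hμstar).integrable_of_lipschitzWith (hH (R n)))
    (fun n z => truncSq_nonneg _ _) (fun n z => truncSq_le_sq _ _)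
    (fun z => (tendsto_truncSq_sq (G z)).comp hR) fun n => hbound (R n)

theorem ae_tendsto_average_sq (hP : IsMarkovChainLaw π ν P)
    (h : IsWassersteinContraction π C γ) (hν : FiniteFirstMoment ν)
    (hμstar : FiniteFirstMoment μstar) (hinv : Pmeas π μstar = μstar) (hG : LipschitzWith L G)
    (hδ : 0 < δ) (hMint : ∀ n, Integrable (fun ω => |G (ω n, ω (n + 1))| ^ (2 + δ)) P)
    (hM : ∀ n, ∫ ω, |G (ω n, ω (n + 1))| ^ (2 + δ) ∂P ≤ M) :
    ∀ᵐ ω ∂P, Tendsto (fun n : ℕ => (∑ i ∈ Finset.range n, G (ω i, ω (i + 1)) ^ 2) / n) atTop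
      (𝓝 (∫ z, G z ^ 2 ∂(μstar ⊗ₘ π))) := by
  have := hP.prob
  let R : ℕ → ℝ≥0 := fun n => (n : ℝ≥0) ^ (1 / 8 : ℝ)
  have hR : Tendsto R atTop atTop :=
    (NNReal.tendsto_rpow_atTop (by norm_num)).comp tendsto_natCast_atTop_atTop
  obtain ⟨A, hA⟩ := hP.exists_integral_abs_average_sq_sub_le h hν hμstar hinv hG hδ.le hMint hM
  have hM0 : 0 ≤ M := (integral_nonneg fun ω => by positivity).trans (hM 0)
  refine ae_tendsto_average_of_integral_abs_le (ε := min (1 / 4) (δ / 8)) (C := √A + M)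
    (fun i ω => sq_nonneg _) (fun i => integrable_sq_of_integrable_rpow
      (hP.integrable_pair h hν hG i).aestronglyMeasurable hδ.le (hMint i))
    (hP.tendsto_integral_truncSq h hν hμstar hinv hG hδ.le hMint hM hR)
    (lt_min (by norm_num) (by positivity)) fun n hn => ?_
  have hn1 : (1 : ℝ) ≤ n := Nat.one_le_cast.2 hn
  have hn0 : (0 : ℝ) ≤ n := zero_le_one.trans hn1
  have hmain : √(A * (R n : ℝ) ^ 4 / n) = √A * (n : ℝ) ^ (-(1 / 4) : ℝ) := by
    rw [mul_div_assoc, Real.sqrt_mul' _ (by positivity)]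
    congr 1
    rw [Real.sqrt_eq_rpow, NNReal.coe_rpow, NNReal.coe_natCast, ← Real.rpow_natCast,
      ← Real.rpow_mul hn0, ← Real.rpow_sub_one (by positivity), ← Real.rpow_mul hn0]
    norm_num
  have htail : (R n : ℝ) ^ (-δ) = (n : ℝ) ^ (-(δ / 8)) := by
    rw [NNReal.coe_rpow, NNReal.coe_natCast, ← Real.rpow_mul hn0]
    ring_nf
  refine (hA (R n) n (NNReal.one_le_rpow (Nat.one_le_cast.2 hn) (by norm_num)) hn).trans ?_
  rw [hmain, htail, add_mul, mul_comm _ M]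
  gcongr
  exacts [min_le_left _ _, min_le_right _ _]

end IsMarkovChainLaw

end StrongLaw

section LipschitzMoments

variable {S : Type*} [PseudoMetricSpace S] {G : S × S → ℝ} {L : ℝ≥0} {p : ℝ}

lemma abs_rpow_le_of_lipschitzWith_prod (hG : LipschitzWith L G) (hp : 1 ≤ p) (a x y : S) :
    |G (x, y)| ^ p ≤ 2 ^ (p - 1) * (|G (a, a)| ^ p + L ^ p * (dist a x ^ p + dist a y ^ p)) := by
  have hp0 : 0 ≤ p := zero_le_one.trans hp
  have htriangle : |G (x, y)| ≤ |G (a, a)| + L * max (dist a x) (dist a y) := by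
    have hdist := hG.dist_le_mul (x, y) (a, a)
    rw [Real.dist_eq, Prod.dist_eq, dist_comm x, dist_comm y] at hdist
    linarith [abs_sub_abs_le_abs_sub (G (x, y)) (G (a, a))]
  have hmax : max (dist a x) (dist a y) ^ p ≤ dist a x ^ p + dist a y ^ p := by
    rw [(Real.monotoneOn_rpow_Ici_of_exponent_nonneg hp0).map_max dist_nonneg dist_nonneg]
    exact max_le_add_of_nonneg (by positivity) (by positivity)
  calc |G (x, y)| ^ p
      ≤ (|G (a, a)| + L * max (dist a x) (dist a y)) ^ p := by gcongr
    _ ≤ 2 ^ (p - 1) * (|G (a, a)| ^ p + (L * max (dist a x) (dist a y)) ^ p) :=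
        mod_cast NNReal.rpow_add_le_mul_rpow_add_rpow ‖G (a, a)‖₊
          (L * max (nndist a x) (nndist a y)) hp
    _ ≤ 2 ^ (p - 1) * (|G (a, a)| ^ p + L ^ p * (dist a x ^ p + dist a y ^ p)) := by
        rw [Real.mul_rpow L.coe_nonneg (le_max_of_le_left dist_nonneg)]
        gcongr

variable {Ω : Type*} [MeasurableSpace Ω] {P : Measure Ω} {X Y : Ω → S} {a : S}

lemma integral_abs_rpow_le_of_lipschitzWith_prod [IsProbabilityMeasure P] {M : ℝ}
    (hG : LipschitzWith L G) (hp : 1 ≤ p)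
    (hXp : Integrable (fun ω => dist a (X ω) ^ p) P)
    (hYp : Integrable (fun ω => dist a (Y ω) ^ p) P)
    (hXM : ∫ ω, dist a (X ω) ^ p ∂P ≤ M) (hYM : ∫ ω, dist a (Y ω) ^ p ∂P ≤ M) :
    ∫ ω, |G (X ω, Y ω)| ^ p ∂P ≤ 2 ^ (p - 1) * (|G (a, a)| ^ p + L ^ p * (M + M)) := by
  have hsum := (hXp.add hYp).const_mul (L ^ p : ℝ)
  refine (integral_mono_of_nonneg (ae_of_all _ fun _ => by positivity)
    (((integrable_const (|G (a, a)| ^ p)).add hsum).const_mul (2 ^ (p - 1) : ℝ))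
    (ae_of_all _ fun ω => abs_rpow_le_of_lipschitzWith_prod hG hp a (X ω) (Y ω))).trans ?_
  rw [integral_const_mul, integral_add' (integrable_const _) hsum, integral_const_mul,
    integral_add' hXp hYp, integral_const, probReal_univ, one_smul]
  gcongr

variable [MeasurableSpace S] [OpensMeasurableSpace S] [SecondCountableTopology S]

lemma integrable_abs_rpow_of_lipschitzWith_prod [IsFiniteMeasure P] (hG : LipschitzWith L G)
    (hp : 1 ≤ p) (hX : Measurable X) (hY : Measurable Y)
    (hXp : Integrable (fun ω => dist a (X ω) ^ p) P)
    (hYp : Integrable (fun ω => dist a (Y ω) ^ p) P) :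
    Integrable (fun ω => |G (X ω, Y ω)| ^ p) P := by
  refine (((integrable_const (|G (a, a)| ^ p)).add ((hXp.add hYp).const_mul (L ^ p : ℝ))).const_mul
    (2 ^ (p - 1) : ℝ)).mono' ?_ (ae_of_all _ fun ω => ?_)
  · exact ((hG.continuous.measurable.comp (hX.prodMk hY)).norm.pow_const p).aestronglyMeasurable
  · rw [Real.norm_of_nonneg (by positivity)]
    exact abs_rpow_le_of_lipschitzWith_prod hG hp a (X ω) (Y ω)

end LipschitzMoments

section MartingaleIncrement

variable {S : Type*} [MeasurableSpace S] {π : Kernel S S} {ψ : S → ℝ}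

/-- The function `G(x, y) = χ(y) - χ(x) + ψ(y)` through which the martingale differences depend on
consecutive states of the chain: `Z_{n+1} = G(X_n, X_{n+1})`. -/
noncomputable def martingaleIncrement (π : Kernel S S) (ψ : S → ℝ) (z : S × S) : ℝ :=
  chiFun π ψ z.2 - chiFun π ψ z.1 + ψ z.2

lemma sum_Icc_ZFun_sq (n : ℕ) (ω : ℕ → S) :
    ∑ l ∈ Finset.Icc 1 n, ZFun π ψ l ω ^ 2 =
      ∑ i ∈ Finset.range n, martingaleIncrement π ψ (ω i, ω (i + 1)) ^ 2 := by
  rw [← Finset.Ico_add_one_right_eq_Icc, Finset.sum_Ico_eq_sum_range]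
  simp [ZFun, martingaleIncrement, add_comm 1]

lemma IsWassersteinContraction.exists_lipschitzWith_martingaleIncrement [MetricSpace S]
    [OpensMeasurableSpace S] {C γ K : ℝ≥0} {μstar : Measure S}
    (h : IsWassersteinContraction π C γ) (hμstar : FiniteFirstMoment μstar)
    (hinv : Pmeas π μstar = μstar) (hψ : LipschitzWith K ψ) (hψ0 : ∫ x, ψ x ∂μstar = 0) :
    ∃ L, LipschitzWith L (martingaleIncrement π ψ) :=
  have hχ := h.lipschitzWith_chiFun hμstar hinv hψ hψ0
  ⟨_, ((hχ.comp LipschitzWith.prod_snd).sub (hχ.comp LipschitzWith.prod_fst)).add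
    (hψ.comp LipschitzWith.prod_snd)⟩

end MartingaleIncrement

theorem lemma2_as_convergence_of_squares_general {S : Type*} [MeasurableSpace S] [MetricSpace S]
    [SecondCountableTopology S] [BorelSpace S] {π : Kernel S S} [IsMarkovKernel π] {C γ : ℝ≥0}
    (h : IsWassersteinContraction π C γ) {μ : Measure S} (hμ : FiniteFirstMoment μ)
    {Pμ : Measure (ℕ → S)} (hPμ : IsMarkovChainLaw π μ Pμ) {x₀ : S} {δ : ℝ} (hδ : 0 < δ)
    (hint : ∀ n, Integrable (fun ω : ℕ → S => dist x₀ (ω n) ^ (2 + δ)) Pμ)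
    (hmoment : ∃ M : ℝ, ∀ n, ∫ ω : ℕ → S, dist x₀ (ω n) ^ (2 + δ) ∂Pμ ≤ M)
    {μstar : Measure S} (hμstar : FiniteFirstMoment μstar) (hinv : Pmeas π μstar = μstar)
    {ψ : S → ℝ} {K : ℝ≥0} (hψ : LipschitzWith K ψ) (hψ0 : ∫ x, ψ x ∂μstar = 0)
    {Pstar : Measure (ℕ → S)} (hPstar : IsMarkovChainLaw π μstar Pstar) :
    ∀ᵐ ω ∂Pμ, Tendsto
      (fun n : ℕ => (1 / (n : ℝ)) * ∑ l ∈ Finset.Icc 1 n, (ZFun π ψ l ω) ^ 2)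
      atTop (𝓝 (∫ ω', (ZFun π ψ 1 ω') ^ 2 ∂Pstar)) := by
  have := hPμ.prob
  obtain ⟨M, hM⟩ := hmoment
  obtain ⟨L, hG⟩ := h.exists_lipschitzWith_martingaleIncrement hμstar hinv hψ hψ0
  have hp : 1 ≤ 2 + δ := by linarith
  have hσ : ∫ ω', (ZFun π ψ 1 ω') ^ 2 ∂Pstar =
      ∫ z, martingaleIncrement π ψ z ^ 2 ∂(μstar ⊗ₘ π) :=
    hPstar.integral_pair (hG.continuous.measurable.pow_const 2) 0
  have hlim := hPμ.ae_tendsto_average_sq h hμ hμstar hinv hG hδ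
    (fun n => integrable_abs_rpow_of_lipschitzWith_prod hG hp (measurable_pi_apply n)
      (measurable_pi_apply (n + 1)) (hint n) (hint (n + 1)))
    (fun n => integral_abs_rpow_le_of_lipschitzWith_prod hG hp (hint n) (hint (n + 1))
      (hM n) (hM (n + 1)))
  simpa only [hσ, sum_Icc_ZFun_sq, div_eq_inv_mul, mul_one] using hlim

/-- Lemma 2: `(1/n) ∑_{l=1}^n Z_l² → σ²` `P_μ`-almost surely. -/
theorem lemma2_as_convergence_of_squares
    {E : Type*} [MeasurableSpace E] [MetricSpace E] [CompleteSpace E]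
    [SecondCountableTopology E] [BorelSpace E]
    (π : Kernel E E) [IsMarkovKernel π] (γ c : ℝ) (hγ : γ ∈ Set.Ioo (0 : ℝ) 1) (hc : 0 < c)
    -- (H0): the Feller property
    (hH0 : ∀ f : E → ℝ, Continuous f → IsBounded (Set.range f) → Continuous (Pfun π f))
    -- (H1): `P` preserves `M_{1,1}`
    (hH1 : ∀ ν : MeasureTheory.Measure E, FiniteFirstMoment ν → FiniteFirstMoment (Pmeas π ν))
    -- (H2): spectral gap in the Wasserstein metric
    (hH2 : ∀ n : ℕ, 1 ≤ n → ∀ ν₁ ν₂ : MeasureTheory.Measure E, FiniteFirstMoment ν₁ →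
      FiniteFirstMoment ν₂ →
      wassDist ((Pmeas π)^[n] ν₁) ((Pmeas π)^[n] ν₂) ≤ c * γ ^ n * wassDist ν₁ ν₂)
    -- the chain: initial distribution `μ ∈ M_{1,1}` and its law `Pμ` on `E^ℕ`
    (μ : MeasureTheory.Measure E) (hμ : FiniteFirstMoment μ)
    (Pμ : MeasureTheory.Measure (ℕ → E)) (hPμ : IsMarkovChainLaw π μ Pμ)
    -- (H3): uniformly bounded moments of order `2 + δ`
    (x₀ : E) (δ : ℝ) (hδ : 0 < δ)
    (hH3int : ∀ n : ℕ, Integrable (fun ω : ℕ → E => dist x₀ (ω n) ^ (2 + δ)) Pμ)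
    (hH3 : ∃ M : ℝ, ∀ n : ℕ, ∫ ω : ℕ → E, dist x₀ (ω n) ^ (2 + δ) ∂Pμ ≤ M)
    -- the unique invariant measure `μ* ∈ M_{1,1}`
    (μstar : MeasureTheory.Measure E) (hμstar : FiniteFirstMoment μstar)
    (hinv : Pmeas π μstar = μstar)
    (huniq : ∀ ν : MeasureTheory.Measure E, IsProbabilityMeasure ν → Pmeas π ν = ν → ν = μstar)
    -- `ψ` is Lipschitz with `⟨ψ, μ*⟩ = 0`
    (ψ : E → ℝ) (Lψ : ℝ≥0) (hψ : LipschitzWith Lψ ψ) (hψ0 : ∫ x, ψ x ∂μstar = 0)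
    -- the law of the stationary chain, used to define `σ² = E_{μ*} Z₁²`
    (Pstar : MeasureTheory.Measure (ℕ → E)) (hPstar : IsMarkovChainLaw π μstar Pstar) :
    ∀ᵐ ω ∂Pμ, Tendsto
      (fun n : ℕ => (1 / (n : ℝ)) * ∑ l ∈ Finset.Icc 1 n, (ZFun π ψ l ω) ^ 2)
      atTop (𝓝 (∫ ω', (ZFun π ψ 1 ω') ^ 2 ∂Pstar)) :=
  lemma2_as_convergence_of_squares_general
    (.of_one_le ⟨hγ.1.le, hγ.2⟩ hH1 hH2) hμ hPμ hδ hH3int hH3 hμstar hinv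
    hψ hψ0 hPstar
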